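/- arXiv:1907.01832 — 11 statements merged into one kernel-verified Lean document; each statement's English description precedes it below -/
import Mathlib

section
/- For every complex number s with 0 < Re(s) < 1/2, the Mellin-transform definition of the spectral zeta function of the graph ℤ agrees with a ratio of Gamma functions: (1/Γ(s)) ∫₀^∞ e^{-2t} I₀(2t) t^{s-1} dt = 4^{-s} Γ(1/2 − s) / (√π · Γ(1 − s)). -/
open MeasureTheory Real

/-- The modified Bessel function of the first kind of order 0,
`I₀(z) = ∑_{m=0}^∞ (z/2)^{2m} / (m!)²`. -/
noncomputable def besselI0 (z : ℝ) : ℝ :=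
  ∑' m : ℕ, (z / 2) ^ (2 * m) / (Nat.factorial m) ^ 2

open Set in
lemma zaux_beta (s : ℂ) (h1 : s.re < 1 / 2) :
    IntegrableOn (fun θ : ℝ => (((1 - cos θ) / 2 : ℝ) : ℂ) ^ (-s)) (Ioo 0 π) ∧
    ∫ θ in Ioo 0 π, (((1 - cos θ) / 2 : ℝ) : ℂ) ^ (-s) =
      Complex.betaIntegral (1 / 2 - s) (1 / 2) := by
  have hderiv : ∀ x ∈ Ioo 0 π, HasDerivWithinAt (fun θ : ℝ => (1 - cos θ) / 2) (sin x / 2)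
      (Ioo 0 π) x := by
    intro x _
    have := (((hasDerivAt_cos x).const_sub 1).div_const 2).hasDerivWithinAt (s := Ioo 0 π)
    simpa using this
  have hinj : InjOn (fun θ : ℝ => (1 - cos θ) / 2) (Ioo 0 π) := by
    intro x hx y hy h
    have h' : (1 - cos x) / 2 = (1 - cos y) / 2 := h
    exact injOn_cos (Ioo_subset_Icc_self hx) (Ioo_subset_Icc_self hy) (by linarith)
  have himg : (fun θ : ℝ => (1 - cos θ) / 2) '' (Ioo 0 π) = Ioo 0 1 := by
    ext u
    constructor
    · rintro ⟨x, hx, rfl⟩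
      have hs := sin_pos_of_mem_Ioo hx
      have := sin_sq_add_cos_sq x
      constructor
      · show 0 < (1 - cos x) / 2
        nlinarith [neg_one_le_cos x, cos_le_one x]
      · show (1 - cos x) / 2 < 1
        nlinarith [neg_one_le_cos x, cos_le_one x]
    · rintro ⟨h0, h1⟩
      refine ⟨arccos (1 - 2 * u), ⟨arccos_pos.2 (by linarith), ?_⟩, ?_⟩
      · refine lt_of_le_of_ne (arccos_le_pi _) ?_
        intro h
        rw [arccos_eq_pi] at h
        linarith
      · show (1 - cos (arccos (1 - 2 * u))) / 2 = u
        rw [cos_arccos (by linarith) (by linarith)]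
        ring
  have hpt : ∀ x ∈ Ioo 0 π, |sin x / 2| • (fun u : ℝ => (u : ℂ) ^ ((1 / 2 - s) - 1) *
      (1 - (u : ℂ)) ^ ((1 / 2 : ℂ) - 1)) ((1 - cos x) / 2) =
      (((1 - cos x) / 2 : ℝ) : ℂ) ^ (-s) := by
    intro x hx
    have hs := sin_pos_of_mem_Ioo hx
    have hu : (1 - cos x) / 2 ∈ Ioo (0 : ℝ) 1 := by
      rw [← himg]; exact mem_image_of_mem (fun θ : ℝ => (1 - cos θ) / 2) hx
    have hsq : sin x / 2 = ((1 - cos x) / 2) ^ (1 / 2 : ℝ) * (1 - (1 - cos x) / 2) ^ (1 / 2 : ℝ) := by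
      rw [← mul_rpow hu.1.le (by linarith [hu.2]), ← sqrt_eq_rpow]
      symm
      rw [sqrt_eq_iff_mul_self_eq_of_pos (by positivity)]
      nlinarith [sin_sq_add_cos_sq x]
    rw [abs_of_pos (by positivity), hsq]
    generalize (1 - cos x) / 2 = u at *
    obtain ⟨hu0, hu1⟩ := hu
    have hv : (0 : ℝ) < 1 - u := by linarith
    have hu0' : (u : ℂ) ≠ 0 := by exact_mod_cast hu0.ne'
    have hv' : ((1 - u : ℝ) : ℂ) ≠ 0 := by exact_mod_cast hv.ne'
    have e : (1 - (u : ℂ)) = ((1 - u : ℝ) : ℂ) := by push_cast; ring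
    simp only [Complex.real_smul]
    rw [e, Complex.ofReal_mul, Complex.ofReal_cpow hu0.le, Complex.ofReal_cpow hv.le]
    rw [show ∀ a b c d : ℂ, a * b * (c * d) = (a * c) * (b * d) by intros; ring,
      ← Complex.cpow_add _ _ hu0', ← Complex.cpow_add _ _ hv']
    push_cast
    rw [show (1 / 2 + ((1 / 2 - s) - 1) : ℂ) = -s by ring,
      show (1 / 2 + (1 / 2 - 1) : ℂ) = 0 by ring]
    simp
  have hre : 0 < (1 / 2 - s).re := by simp at h1 ⊢; linarith
  have hB := Complex.betaIntegral_convergent hre (v := 1 / 2) (by norm_num)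
  constructor
  · rw [intervalIntegrable_iff_integrableOn_Ioc_of_le zero_le_one] at hB
    have hB' := hB.mono_set Ioo_subset_Ioc_self
    rw [← himg, integrableOn_image_iff_integrableOn_abs_deriv_smul measurableSet_Ioo hderiv hinj]
      at hB'
    exact hB'.congr_fun hpt measurableSet_Ioo
  · rw [Complex.betaIntegral, intervalIntegral.integral_of_le zero_le_one,
      integral_Ioc_eq_integral_Ioo, ← himg,
      integral_image_eq_integral_abs_deriv_smul measurableSet_Ioo hderiv hinj]
    exact (setIntegral_congr_fun measurableSet_Ioo hpt).symm

lemma zaux_cos_even (m : ℕ) : ∫ x in (0 : ℝ)..π, cos x ^ (2 * m) =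
    π * (Nat.factorial (2 * m)) / (4 ^ m * (Nat.factorial m) ^ 2) := by
  induction m with
  | zero => simp
  | succ k ih =>
    rw [show 2 * (k + 1) = 2 * k + 2 by ring, integral_cos_pow, ih]
    simp only [sin_pi, sin_zero, Nat.factorial_succ]
    push_cast
    field_simp
    ring

lemma zaux_cos_odd (m : ℕ) : ∫ x in (0 : ℝ)..π, cos x ^ (2 * m + 1) = 0 := by
  induction m with
  | zero => simp
  | succ k ih =>
    rw [show 2 * (k + 1) + 1 = (2 * k + 1) + 2 by ring, integral_cos_pow, ih]
    simp

lemma zaux_bessel (z : ℝ) : ∫ x in (0 : ℝ)..π, exp (z * cos x) = π * besselI0 z := by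
  have key : HasSum (fun n : ℕ => ∫ x in (0 : ℝ)..π, (z * cos x) ^ n / (Nat.factorial n))
      (∫ x in (0 : ℝ)..π, exp (z * cos x)) := by
    apply intervalIntegral.hasSum_integral_of_dominated_convergence
      (fun n _ => |z| ^ n / (Nat.factorial n))
    · intro n
      exact Continuous.aestronglyMeasurable (by fun_prop)
    · intro n
      filter_upwards with x _
      rw [norm_div, norm_pow, norm_mul, Real.norm_eq_abs, Real.norm_eq_abs, Real.norm_natCast]
      gcongr
      exact mul_le_of_le_one_right (abs_nonneg _) (abs_cos_le_one x)
    · filter_upwards with x _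
      exact Real.summable_pow_div_factorial _
    · exact intervalIntegrable_const
    · filter_upwards with x _
      rw [Real.exp_eq_exp_ℝ]
      exact NormedSpace.expSeries_div_hasSum_exp (z * cos x)
  have hval : ∀ n : ℕ, ∫ x in (0 : ℝ)..π, (z * cos x) ^ n / (Nat.factorial n) =
      z ^ n / (Nat.factorial n) * ∫ x in (0 : ℝ)..π, cos x ^ n := by
    intro n
    rw [← intervalIntegral.integral_const_mul]
    congr 1; ext x; rw [mul_pow]; ring
  simp only [hval] at key
  have hinj : Function.Injective (fun m : ℕ => 2 * m) := fun a b h => by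
    have : 2 * a = 2 * b := h
    omega
  rw [← hinj.hasSum_iff] at key
  · rw [← key.tsum_eq, besselI0, ← tsum_mul_left]
    congr 1; ext m
    simp only [Function.comp]
    rw [zaux_cos_even, div_pow, pow_mul 2 2 m]
    norm_num
    field_simp
  · intro n hn
    rcases Nat.even_or_odd' n with ⟨k, rfl | rfl⟩
    · exact absurd ⟨k, rfl⟩ hn
    · rw [zaux_cos_odd, mul_zero]

open Set in
lemma zaux_kernel (s : ℂ) (h0 : 0 < s.re) (r : ℝ) (hr : 0 < r) :
    IntegrableOn (fun t : ℝ => ((exp (-(r * t)) : ℝ) : ℂ) * (t : ℂ) ^ (s - 1)) (Ioi 0) ∧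
    ∫ t in Ioi (0 : ℝ), ((exp (-(r * t)) : ℝ) : ℂ) * (t : ℂ) ^ (s - 1) =
      (r : ℂ) ^ (-s) * Complex.Gamma s := by
  have hr' : (r : ℂ) ≠ 0 := by exact_mod_cast hr.ne'
  have h := Complex.integral_cpow_mul_exp_neg_mul_Ioi h0 hr
  have e : ∫ t in Ioi (0 : ℝ), ((exp (-(r * t)) : ℝ) : ℂ) * (t : ℂ) ^ (s - 1) =
      (r : ℂ) ^ (-s) * Complex.Gamma s := by
    rw [Complex.cpow_neg, ← Complex.inv_cpow _ _ (by
      rw [Complex.arg_ofReal_of_nonneg hr.le]; exact pi_pos.ne), ← one_div, ← h]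
    congr 1; ext t; push_cast; ring
  refine ⟨Integrable.of_integral_ne_zero ?_, e⟩
  rw [e]
  exact mul_ne_zero (by simp [Complex.cpow_eq_zero_iff, hr']) (Complex.Gamma_ne_zero_of_re_pos h0)

open Set in
lemma zaux_fubini (s : ℂ) (h0 : 0 < s.re) (h1 : s.re < 1 / 2) :
    Integrable (Function.uncurry fun (t θ : ℝ) =>
      ((exp (-((2 * (1 - cos θ)) * t)) : ℝ) : ℂ) * (t : ℂ) ^ (s - 1))
      ((volume.restrict (Ioi 0)).prod (volume.restrict (Ioo 0 π))) := by
  have hpos : ∀ θ ∈ Ioo 0 π, 0 < 2 * (1 - cos θ) := by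
    intro θ hθ
    have hs := sin_pos_of_mem_Ioo hθ
    nlinarith [neg_one_le_cos θ, cos_le_one θ, sin_sq_add_cos_sq θ]
  rw [integrable_prod_iff']
  · constructor
    · filter_upwards [ae_restrict_mem measurableSet_Ioo] with θ hθ
      exact (zaux_kernel s h0 _ (hpos θ hθ)).1
    · have hI := ((zaux_beta (s.re : ℂ) (by simpa using h1)).1.norm).const_mul
        (4 ^ (-s.re) * Gamma s.re)
      refine hI.congr ?_
      filter_upwards [ae_restrict_mem measurableSet_Ioo] with θ hθ
      have hp := hpos θ hθ
      have h := integral_rpow_mul_exp_neg_mul_Ioi h0 hp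
      have : ∫ t in Ioi (0 : ℝ), ‖(Function.uncurry fun (t θ : ℝ) =>
          ((exp (-((2 * (1 - cos θ)) * t)) : ℝ) : ℂ) * (t : ℂ) ^ (s - 1)) (t, θ)‖ =
          ∫ t in Ioi (0 : ℝ), t ^ (s.re - 1) * exp (-((2 * (1 - cos θ)) * t)) := by
        refine setIntegral_congr_fun measurableSet_Ioi fun t ht => ?_
        simp only [Function.uncurry]
        rw [norm_mul, Complex.norm_real, Real.norm_eq_abs, abs_exp,
          Complex.norm_cpow_eq_rpow_re_of_pos ht, mul_comm]
        simp
      rw [this, h]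
      rw [Complex.norm_cpow_eq_rpow_re_of_pos (by linarith)]
      simp only [Complex.neg_re, Complex.ofReal_re]
      rw [one_div, inv_rpow hp.le, ← rpow_neg hp.le,
        show 2 * (1 - cos θ) = 4 * ((1 - cos θ) / 2) by ring,
        mul_rpow (by norm_num) (by linarith)]
      ring
  · apply AEStronglyMeasurable.mul
    · exact Continuous.aestronglyMeasurable (by fun_prop)
    · apply Measurable.aestronglyMeasurable
      exact (Complex.measurable_ofReal.comp measurable_fst).pow_const _

/-- For `0 < Re s < 1/2`, the Mellin-transform definition of the spectral zeta
function of the graph `ℤ` agrees with the Gamma-quotient closed form: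
`(1/Γ(s)) ∫₀^∞ e^{-2t} I₀(2t) t^{s-1} dt = 4^{-s} Γ(1/2 − s) / (√π Γ(1 − s))`. -/
theorem zetaZ_integral_eq_gamma_quotient (s : ℂ) (h0 : 0 < s.re) (h1 : s.re < 1 / 2) :
    (1 / Complex.Gamma s) *
        ∫ t in Set.Ioi (0 : ℝ), ((Real.exp (-2 * t) * besselI0 (2 * t) : ℝ) : ℂ) * (t : ℂ) ^ (s - 1) =
      (4 : ℂ) ^ (-s) * Complex.Gamma (1 / 2 - s) /
        ((Real.sqrt π : ℂ) * Complex.Gamma (1 - s)) := by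
  have hswap := integral_integral_swap (zaux_fubini s h0 h1)
  have hL : ∀ t : ℝ, ∫ θ in Set.Ioo 0 π,
      ((exp (-((2 * (1 - cos θ)) * t)) : ℝ) : ℂ) * (t : ℂ) ^ (s - 1) =
      (π : ℂ) * (((Real.exp (-2 * t) * besselI0 (2 * t) : ℝ) : ℂ) * (t : ℂ) ^ (s - 1)) := by
    intro t
    rw [integral_mul_const, integral_complex_ofReal, ← integral_Ioc_eq_integral_Ioo,
      ← intervalIntegral.integral_of_le pi_pos.le]
    have : ∫ θ in (0 : ℝ)..π, exp (-((2 * (1 - cos θ)) * t)) =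
        exp (-2 * t) * (π * besselI0 (2 * t)) := by
      rw [← zaux_bessel, ← intervalIntegral.integral_const_mul]
      congr 1; ext θ
      rw [← exp_add]; congr 1; ring
    rw [this]; push_cast; ring
  have hR : ∫ θ in Set.Ioo 0 π, ∫ t in Set.Ioi (0 : ℝ),
      ((exp (-((2 * (1 - cos θ)) * t)) : ℝ) : ℂ) * (t : ℂ) ^ (s - 1) =
      (4 : ℂ) ^ (-s) * Complex.Gamma s * Complex.betaIntegral (1 / 2 - s) (1 / 2) := by
    rw [← (zaux_beta s h1).2, ← integral_const_mul]
    refine setIntegral_congr_fun measurableSet_Ioo fun θ hθ => ?_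
    have hs := sin_pos_of_mem_Ioo hθ
    have hp : 0 < 1 - cos θ := by
      nlinarith [neg_one_le_cos θ, cos_le_one θ, sin_sq_add_cos_sq θ]
    rw [(zaux_kernel s h0 _ (by linarith : 0 < 2 * (1 - cos θ))).2,
      show 2 * (1 - cos θ) = 4 * ((1 - cos θ) / 2) by ring, Complex.ofReal_mul,
      Complex.mul_cpow_ofReal_nonneg (by norm_num) (by linarith)]
    push_cast
    ring
  simp only [hL] at hswap
  rw [hR, integral_const_mul, Complex.betaIntegral_eq_Gamma_mul_div _ _
    (by simp at h1 ⊢; linarith) (by norm_num), Complex.Gamma_one_half_eq,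
    show (1 / 2 - s + 1 / 2 : ℂ) = 1 - s by ring] at hswap
  have hG := Complex.Gamma_ne_zero_of_re_pos h0
  have hG1 : Complex.Gamma (1 - s) ≠ 0 := Complex.Gamma_ne_zero_of_re_pos (by simp; linarith)
  have hpi : (π : ℂ) ≠ 0 := by exact_mod_cast pi_ne_zero
  have hsp : (Real.sqrt π : ℂ) ≠ 0 := by exact_mod_cast (sqrt_pos.2 pi_pos).ne'
  have hsp2 : (Real.sqrt π : ℂ) * (Real.sqrt π : ℂ) = π := by
    exact_mod_cast mul_self_sqrt pi_pos.le
  have hsq : (π : ℂ) ^ (1 / 2 : ℂ) = (Real.sqrt π : ℂ) := by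
    rw [sqrt_eq_rpow, Complex.ofReal_cpow pi_pos.le]; norm_num
  rw [hsq] at hswap
  apply mul_left_cancel₀ (mul_ne_zero hpi hG)
  rw [show ∀ I : ℂ, (π : ℂ) * Complex.Gamma s * (1 / Complex.Gamma s * I) = π * I by
    intro I; field_simp, hswap, ← hsp2]
  field_simp
end

section
/- For t > 0, the function t ↦ e^{-2t} I₀(2t) t^{s-1} (for a complex parameter s) is integrable on (0, ∞) if and only if 0 < Re(s) < 1/2. -/
open MeasureTheory Real

lemma hasSum_even_mul (x : ℝ) :
    HasSum (fun m : ℕ => (2 * m : ℝ) * (x ^ (2 * m) / (2 * m).factorial)) (x * Real.sinh x) := by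
  rw [← hasSum_nat_add_iff' 1]
  simp only [Finset.range_one, Finset.sum_singleton, Nat.cast_zero, mul_zero, zero_mul, sub_zero]
  refine ((Real.hasSum_sinh x).mul_left x).congr_fun ?_ |> fun h => h
  intro m
  rw [show 2 * (m + 1) = (2 * m + 1) + 1 by ring, Nat.factorial_succ]
  have := Nat.factorial_ne_zero (2 * m + 1)
  have h2 : (2 * (m:ℝ) + 1 + 1) ≠ 0 := by positivity
  push_cast
  field_simp
  ring

noncomputable def pc (m : ℕ) : ℝ := Nat.centralBinom m / 4 ^ m

lemma pc_pos (m : ℕ) : 0 < pc m := by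
  have := Nat.centralBinom_pos m
  unfold pc; positivity

lemma pc_succ (m : ℕ) : pc (m + 1) = pc m * ((2 * m + 1) / (2 * (m + 1))) := by
  have h : ((m:ℝ) + 1) * Nat.centralBinom (m + 1) = 2 * (2 * m + 1) * Nat.centralBinom m := by
    exact_mod_cast Nat.succ_mul_centralBinom_succ m
  have h1 : ((m:ℝ) + 1) ≠ 0 := by positivity
  unfold pc
  rw [pow_succ]
  field_simp
  linear_combination 2 * h

lemma pc_upper (m : ℕ) : pc m ^ 2 * (2 * m + 1) ≤ 1 := by
  induction m with
  | zero => simp [pc]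
  | succ m ih =>
    refine le_trans ?_ ih
    rw [pc_succ, mul_pow, mul_assoc]
    refine mul_le_mul_of_nonneg_left ?_ (sq_nonneg _)
    push_cast
    rw [div_pow, div_mul_eq_mul_div, div_le_iff₀ (by positivity)]
    have : (0:ℝ) ≤ m := by positivity
    nlinarith

lemma pc_lower (m : ℕ) : 1 ≤ pc m ^ 2 * (4 * m + 1) := by
  induction m with
  | zero => simp [pc]
  | succ m ih =>
    refine le_trans ih ?_
    rw [pc_succ, mul_pow, mul_assoc]
    refine mul_le_mul_of_nonneg_left ?_ (sq_nonneg _)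
    push_cast
    rw [div_pow, div_mul_eq_mul_div, le_div_iff₀ (by positivity)]
    have : (0:ℝ) ≤ m := by positivity
    nlinarith

lemma pc_le_one (m : ℕ) : pc m ≤ 1 := by
  have h := pc_upper m
  have := pc_pos m
  have : (0:ℝ) ≤ m := by positivity
  have h3 : 0 ≤ pc m ^ 2 * (2 * m) := by positivity
  nlinarith

lemma pc_le (m : ℕ) (a : ℝ) (ha : 0 < a) : pc m ≤ (1 / 2) * (a / (2 * m + 1) + 1 / a) := by
  have h := pc_upper m
  have hp := pc_pos m
  have hn : (0:ℝ) < 2 * m + 1 := by positivity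
  set n : ℝ := 2 * m + 1
  refine (sq_le_sq₀ hp.le (by positivity)).1 ?_
  have h1 : pc m ^ 2 ≤ 1 / n := by rwa [le_div_iff₀ hn]
  refine h1.trans ?_
  have : ((1 / 2) * (a / n + 1 / a)) ^ 2 = 1 / n + ((1 / 2) * (a / n - 1 / a)) ^ 2 := by
    field_simp; ring
  rw [this]
  nlinarith [sq_nonneg ((1 / 2) * (a / n - 1 / a))]

lemma le_pc (m : ℕ) (b : ℝ) (hb : 0 < b) :
    (3 / 2) * (1 / b) - (1 / 2) * (4 * m + 1) / b ^ 3 ≤ pc m := by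
  have h := pc_lower m
  have hp := pc_pos m
  set n : ℝ := 4 * m + 1
  set p := pc m
  have h1 : 0 ≤ p ^ 2 * (2 * p * b ^ 3 + n - 3 * b ^ 2) := by
    have : 0 ≤ (p * b - 1) ^ 2 * (2 * (p * b) + 1) := by positivity
    nlinarith
  have h2 : 0 ≤ 2 * p * b ^ 3 + n - 3 * b ^ 2 := nonneg_of_mul_nonneg_right h1 (by positivity)
  have h3 : p - ((3 / 2) * (1 / b) - (1 / 2) * n / b ^ 3) =
      (2 * p * b ^ 3 + n - 3 * b ^ 2) / (2 * b ^ 3) := by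
    field_simp
    ring
  have : 0 ≤ (2 * p * b ^ 3 + n - 3 * b ^ 2) / (2 * b ^ 3) := by positivity
  linarith

lemma term_eq (t : ℝ) (m : ℕ) : (2 * t / 2) ^ (2 * m) / (Nat.factorial m : ℝ) ^ 2 =
    pc m * ((2 * t) ^ (2 * m) / (2 * m).factorial) := by
  have h : (Nat.centralBinom m : ℝ) * m.factorial * m.factorial = (2 * m).factorial := by
    have := Nat.add_choose_mul_factorial_mul_factorial m m
    rw [← two_mul, ← Nat.centralBinom_eq_two_mul_choose] at this
    exact_mod_cast this
  have h0 := Nat.factorial_ne_zero m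
  have h1 := Nat.centralBinom_ne_zero m
  rw [← h, pc, mul_pow 2 t, pow_mul 2 2 m]
  norm_num
  field_simp

lemma wnn (t : ℝ) (m : ℕ) : 0 ≤ (2 * t) ^ (2 * m) / ((2 * m).factorial : ℝ) := by
  rw [pow_mul]; positivity

lemma hasSum_bessel (t : ℝ) :
    HasSum (fun m : ℕ => pc m * ((2 * t) ^ (2 * m) / (2 * m).factorial)) (besselI0 (2 * t)) := by
  have : Summable (fun m : ℕ => pc m * ((2 * t) ^ (2 * m) / ((2 * m).factorial : ℝ))) := by
    refine Summable.of_nonneg_of_le (fun m => mul_nonneg (pc_pos m).le (wnn t m)) (fun m => ?_)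
      (Real.hasSum_cosh (2 * t)).summable
    exact mul_le_of_le_one_left (wnn t m) (pc_le_one m)
  have h2 := this.hasSum
  unfold besselI0
  simp_rw [term_eq]
  exact h2

lemma bessel_le_cosh (t : ℝ) : besselI0 (2 * t) ≤ Real.cosh (2 * t) :=
  hasSum_le (fun m => mul_le_of_le_one_left (wnn t m) (pc_le_one m)) (hasSum_bessel t)
    (Real.hasSum_cosh (2 * t))

lemma bessel_le (t : ℝ) (ht : 0 < t) :
    besselI0 (2 * t) ≤ Real.exp (2 * t) * (1 / 2 / √(2 * t)) := by
  have ha : 0 < √(2 * t) := by positivity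
  have hs : √(2 * t) ^ 2 = 2 * t := Real.sq_sqrt (by positivity)
  set a := √(2 * t)
  have h1 := (((Real.hasSum_sinh (2 * t)).mul_left (1 / 2 * a / (2 * t))).add
    ((Real.hasSum_cosh (2 * t)).mul_left (1 / 2 / a)))
  have h2 := hasSum_le (fun m => ?_) (hasSum_bessel t) h1
  · refine h2.trans (le_of_eq ?_)
    rw [← hs, ← Real.cosh_add_sinh]
    field_simp
    ring
  · refine (mul_le_mul_of_nonneg_right (pc_le m a ha) (wnn t m)).trans (le_of_eq ?_)
    rw [Nat.factorial_succ, pow_succ]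
    have := Nat.factorial_ne_zero (2 * m)
    have h2 : (2 * (m:ℝ) + 1) ≠ 0 := by positivity
    push_cast
    field_simp

lemma le_bessel (t : ℝ) (ht : 0 < t) :
    Real.cosh (2 * t) / √(4 * t + 1) ≤ besselI0 (2 * t) := by
  have hb : 0 < √(4 * t + 1) := by positivity
  have hs : √(4 * t + 1) ^ 2 = 4 * t + 1 := Real.sq_sqrt (by positivity)
  set b := √(4 * t + 1)
  have h1 := ((Real.hasSum_cosh (2 * t)).mul_left ((3 / 2) * (1 / b) - (1 / 2) / b ^ 3)).sub
    ((hasSum_even_mul (2 * t)).mul_left (1 / b ^ 3))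
  have h2 := hasSum_le (fun m => ?_) h1 (hasSum_bessel t)
  · refine le_trans ?_ h2
    have hsc : Real.sinh (2 * t) ≤ Real.cosh (2 * t) := (Real.sinh_lt_cosh _).le
    have h3 : 1 / b ^ 3 * (2 * t * Real.sinh (2 * t)) ≤ 1 / b ^ 3 * (2 * t * Real.cosh (2 * t)) := by
      gcongr
    have h4 : ((3 / 2) * (1 / b) - (1 / 2) / b ^ 3) * Real.cosh (2 * t)
        - 1 / b ^ 3 * (2 * t * Real.cosh (2 * t)) = Real.cosh (2 * t) / b := by
      have : t = (b ^ 2 - 1) / 4 := by linarith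
      generalize Real.cosh (2 * t) = c
      rw [this]
      field_simp
      ring
    linarith
  · refine le_trans (le_of_eq ?_) (mul_le_mul_of_nonneg_right (le_pc m b hb) (wnn t m))
    field_simp
    ring

noncomputable def hf (t : ℝ) : ℝ := Real.exp (-2 * t) * besselI0 (2 * t)

lemma hf_le_one (t : ℝ) (ht : 0 < t) : hf t ≤ 1 := by
  have h1 := bessel_le_cosh t
  have h2 : Real.cosh (2 * t) ≤ Real.exp (2 * t) := by
    rw [← Real.cosh_add_sinh]
    have := Real.sinh_nonneg_iff.2 (show 0 ≤ 2 * t by positivity)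
    linarith
  calc hf t ≤ Real.exp (-2 * t) * Real.exp (2 * t) :=
        mul_le_mul_of_nonneg_left (h1.trans h2) (Real.exp_pos _).le
    _ = 1 := by rw [← Real.exp_add]; simp

lemma hf_le (t : ℝ) (ht : 0 < t) : hf t ≤ 1 / 2 / √(2 * t) := by
  calc hf t ≤ Real.exp (-2 * t) * (Real.exp (2 * t) * (1 / 2 / √(2 * t))) :=
        mul_le_mul_of_nonneg_left (bessel_le t ht) (Real.exp_pos _).le
    _ = 1 / 2 / √(2 * t) := by rw [← mul_assoc, ← Real.exp_add]; simp

lemma le_hf (t : ℝ) (ht : 0 < t) : 1 / 2 / √(4 * t + 1) ≤ hf t := by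
  have h2 : 1 / 2 * Real.exp (2 * t) ≤ Real.cosh (2 * t) := by
    rw [Real.cosh_eq]
    have := Real.exp_pos (-(2 * t))
    linarith
  calc 1 / 2 / √(4 * t + 1)
      = Real.exp (-2 * t) * (1 / 2 * Real.exp (2 * t) / √(4 * t + 1)) := by
        have : Real.exp (-2 * t) * Real.exp (2 * t) = 1 := by rw [← Real.exp_add]; simp
        linear_combination (-(1 / 2 / √(4 * t + 1))) * this
    _ ≤ Real.exp (-2 * t) * (Real.cosh (2 * t) / √(4 * t + 1)) := by gcongr
    _ ≤ hf t := mul_le_mul_of_nonneg_left (le_bessel t ht) (Real.exp_pos _).le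

lemma measurable_hf : Measurable hf := by
  have : Measurable (fun t : ℝ => besselI0 (2 * t)) := by
    refine measurable_of_tendsto_metrizable (f := fun n t => ∑ m ∈ Finset.range n,
      pc m * ((2 * t) ^ (2 * m) / (2 * m).factorial)) (fun n => by fun_prop) ?_
    rw [tendsto_pi_nhds]
    exact fun t => (hasSum_bessel t).tendsto_sum_nat
  unfold hf
  fun_prop

lemma hf_integrable_iff (σ : ℝ) :
    IntegrableOn (fun t : ℝ => hf t * t ^ (σ - 1)) (Set.Ioi 0) ↔ 0 < σ ∧ σ < 1 / 2 := by
  have hms : Measurable (fun t : ℝ => hf t * t ^ (σ - 1)) := measurable_hf.mul (by fun_prop)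
  have hpos : ∀ t : ℝ, 0 < t → 0 ≤ hf t := fun t ht => le_trans (by positivity) (le_hf t ht)
  have hsplit : ∀ t : ℝ, 0 < t → t ^ (σ - 3 / 2) = t ^ (σ - 1) / √t := by
    intro t ht
    rw [Real.sqrt_eq_rpow, ← Real.rpow_sub ht]; congr 1; ring
  constructor
  · intro h
    constructor
    · have h1 := h.mono_set (show Set.Ioo (0:ℝ) 1 ⊆ Set.Ioi 0 from fun x hx => hx.1)
      have : IntegrableOn (fun t : ℝ => t ^ (σ - 1)) (Set.Ioo 0 1) := by
        refine Integrable.mono' (h1.const_mul (2 * √5)) (by fun_prop) ?_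
        refine (ae_restrict_iff' measurableSet_Ioo).2 (.of_forall fun t ht => ?_)
        have ht0 : 0 < t := ht.1
        rw [Real.norm_of_nonneg (by positivity), ← mul_assoc]
        refine le_mul_of_one_le_left (by positivity) ?_
        have h5 : 1 / 2 / √5 ≤ hf t := by
          refine le_trans ?_ (le_hf t ht0)
          gcongr
          linarith [ht.2]
        calc (1:ℝ) = 2 * √5 * (1 / 2 / √5) := by field_simp
          _ ≤ _ := by gcongr
      rw [intervalIntegral.integrableOn_Ioo_rpow_iff one_pos] at this
      linarith
    · have h1 := h.mono_set (Set.Ioi_subset_Ioi (zero_le_one : (0:ℝ) ≤ 1))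
      have : IntegrableOn (fun t : ℝ => t ^ (σ - 3 / 2)) (Set.Ioi 1) := by
        refine Integrable.mono' (h1.const_mul (2 * √5)) (by fun_prop) ?_
        refine (ae_restrict_iff' measurableSet_Ioi).2 (.of_forall fun t ht => ?_)
        have ht1 : 1 < t := ht
        have ht0 : 0 < t := by linarith
        rw [Real.norm_of_nonneg (by positivity), ← mul_assoc, hsplit t ht0, div_eq_inv_mul]
        refine mul_le_mul_of_nonneg_right ?_ (by positivity)
        have h5 : 1 / 2 / (√5 * √t) ≤ hf t := by
          refine le_trans ?_ (le_hf t ht0)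
          rw [← Real.sqrt_mul (by norm_num)]
          gcongr
          linarith
        calc (√t)⁻¹ = 2 * √5 * (1 / 2 / (√5 * √t)) := by field_simp
          _ ≤ _ := by gcongr
      rw [integrableOn_Ioi_rpow_iff one_pos] at this
      linarith
  · rintro ⟨h0, h1⟩
    rw [← Set.Ioc_union_Ioi_eq_Ioi (zero_le_one : (0:ℝ) ≤ 1), integrableOn_union,
      integrableOn_Ioc_iff_integrableOn_Ioo]
    constructor
    · have := (intervalIntegral.integrableOn_Ioo_rpow_iff (s := σ - 1) one_pos).2 (by linarith)
      refine Integrable.mono' this hms.aestronglyMeasurable ?_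
      refine (ae_restrict_iff' measurableSet_Ioo).2 (.of_forall fun t ht => ?_)
      have ht0 : 0 < t := ht.1
      have := hpos t ht0
      rw [Real.norm_of_nonneg (by positivity)]
      exact mul_le_of_le_one_left (by positivity) (hf_le_one t ht0)
    · have := (integrableOn_Ioi_rpow_iff (s := σ - 3 / 2) one_pos).2 (by linarith)
      refine Integrable.mono' this hms.aestronglyMeasurable ?_
      refine (ae_restrict_iff' measurableSet_Ioi).2 (.of_forall fun t ht => ?_)
      have ht1 : 1 < t := ht
      have ht0 : 0 < t := by linarith
      have := hpos t ht0
      rw [Real.norm_of_nonneg (by positivity), hsplit t ht0, div_eq_inv_mul]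
      refine mul_le_mul_of_nonneg_right ?_ (by positivity)
      refine (hf_le t ht0).trans ?_
      rw [← one_div]
      gcongr
      · norm_num
      · linarith

/-- The function `t ↦ e^{-2t} I₀(2t) t^{s-1}` is integrable on `(0, ∞)`
if and only if `0 < Re s < 1/2`. -/
theorem integrableOn_heatTrace_iff (s : ℂ) :
    IntegrableOn
        (fun t : ℝ => ((Real.exp (-2 * t) * besselI0 (2 * t) : ℝ) : ℂ) * (t : ℂ) ^ (s - 1))
        (Set.Ioi (0 : ℝ)) ↔
      0 < s.re ∧ s.re < 1 / 2 := by
  rw [← hf_integrable_iff s.re]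
  have hm : Measurable (fun t : ℝ => ((hf t : ℝ) : ℂ) * (t : ℂ) ^ (s - 1)) :=
    (Complex.measurable_ofReal.comp measurable_hf).mul (by fun_prop)
  change IntegrableOn (fun t : ℝ => ((hf t : ℝ) : ℂ) * (t : ℂ) ^ (s - 1)) _ ↔ _
  unfold IntegrableOn
  rw [← integrable_norm_iff hm.aestronglyMeasurable]
  refine integrable_congr ?_
  refine (ae_restrict_iff' measurableSet_Ioi).2 (.of_forall fun t ht => ?_)
  have ht0 : 0 < t := ht
  have hp : 0 ≤ hf t := le_trans (by positivity) (le_hf t ht0)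
  simp only [norm_mul, Complex.norm_real, Real.norm_of_nonneg hp,
    Complex.norm_cpow_eq_rpow_re_of_pos ht0, Complex.sub_re, Complex.one_re]
end

section
/- Let ξ_ℤ(s) = 2^s cos(πs/2) ζ_ℤ(s/2), where ζ_ℤ(s) = 4^{-s} Γ(1/2 − s) / (√π · Γ(1 − s)). Then for every complex number s at which both sides are defined (i.e., avoiding the poles of the Gamma factors, which are cancelled by zeros of the cosine factors), ξ_ℤ(s) = ξ_ℤ(1 − s); equivalently, cos(πs/2) Γ((1−s)/2) / Γ(1 − s/2) = cos(π(1−s)/2) Γ(s/2) / Γ((1+s)/2). -/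
open Real

/-- Functional equation `ξ_ℤ(s) = ξ_ℤ(1 − s)` for the completed spectral zeta function
of the graph `ℤ`, in the equivalent form
`cos(πs/2) Γ((1−s)/2) / Γ(1 − s/2) = cos(π(1−s)/2) Γ(s/2) / Γ((1+s)/2)`,
valid at every `s` avoiding the poles of the four Gamma factors. -/
theorem xiZ_functional_equation (s : ℂ)
    (h1 : ∀ n : ℕ, (1 - s) / 2 ≠ -n) (h2 : ∀ n : ℕ, s / 2 ≠ -n)
    (h3 : ∀ n : ℕ, 1 - s / 2 ≠ -n) (h4 : ∀ n : ℕ, (1 + s) / 2 ≠ -n) :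
    Complex.cos (π * s / 2) * Complex.Gamma ((1 - s) / 2) / Complex.Gamma (1 - s / 2) =
      Complex.cos (π * (1 - s) / 2) * Complex.Gamma (s / 2) / Complex.Gamma ((1 + s) / 2) := by
  have g1 := Complex.Gamma_ne_zero h1
  have g2 := Complex.Gamma_ne_zero h2
  have g3 := Complex.Gamma_ne_zero h3
  have g4 := Complex.Gamma_ne_zero h4
  have e1 := Complex.Gamma_mul_Gamma_one_sub ((1 + s) / 2)
  have e2 := Complex.Gamma_mul_Gamma_one_sub (s / 2)
  have a1 : 1 - (1 + s) / 2 = (1 - s) / 2 := by ring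
  have a2 : (π : ℂ) * ((1 + s) / 2) = π * s / 2 + π / 2 := by ring
  have a3 : (π : ℂ) * (1 - s) / 2 = π / 2 - π * (s / 2) := by ring
  rw [a1, a2, Complex.sin_add_pi_div_two] at e1
  rw [a3, Complex.cos_pi_div_two_sub]
  have c1 : Complex.cos (π * s / 2) ≠ 0 := by
    intro h
    rw [h, div_zero] at e1
    exact mul_ne_zero g4 g1 e1
  have c2 : Complex.sin (π * (s / 2)) ≠ 0 := by
    intro h
    rw [h, div_zero] at e2
    exact mul_ne_zero g2 g3 e2
  rw [eq_div_iff c1] at e1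
  rw [eq_div_iff c2] at e2
  rw [div_eq_div_iff g3 g4]
  linear_combination e1 - e2
end

section
/- There exists an entire function F : ℂ → ℂ such that F(s) = 2^s cos(πs/2) · 4^{-s/2} Γ((1−s)/2) / (√π · Γ(1 − s/2)) for every complex s that is not an odd positive integer; that is, the completed zeta function ξ_ℤ(s) = 2^s cos(πs/2) ζ_ℤ(s/2) extends to an entire function. -/
open Real

/-- The completed spectral zeta function `ξ_ℤ(s) = 2^s cos(πs/2) ζ_ℤ(s/2)`, where
`ζ_ℤ(s) = 4^{-s} Γ(1/2 − s) / (√π Γ(1 − s))`, extends to an entire function: there is an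
entire `F : ℂ → ℂ` agreeing with `2^s cos(πs/2) 4^{-s/2} Γ((1−s)/2) / (√π Γ(1 − s/2))`
at every `s` which is not an odd positive integer. -/
theorem xiZ_extends_to_entire :
    ∃ F : ℂ → ℂ, Differentiable ℂ F ∧
      ∀ s : ℂ, (∀ n : ℕ, s ≠ 2 * n + 1) →
        F s = (2 : ℂ) ^ s * Complex.cos (π * s / 2) * (4 : ℂ) ^ (-(s / 2)) *
          Complex.Gamma ((1 - s) / 2) / ((Real.sqrt π : ℂ) * Complex.Gamma (1 - s / 2)) := by
  refine ⟨fun s => (2 : ℂ) ^ s * (4 : ℂ) ^ (-(s / 2)) * (π * (Complex.Gamma ((1 + s) / 2))⁻¹) *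
    (Complex.Gamma (1 - s / 2))⁻¹ * ((Real.sqrt π : ℂ))⁻¹, ?_, ?_⟩
  · have h1 : Differentiable ℂ fun s : ℂ => (Complex.Gamma ((1 + s) / 2))⁻¹ :=
      Complex.differentiable_one_div_Gamma.comp
        (f := fun s : ℂ => (1 + s) / 2) (by fun_prop)
    have h2 : Differentiable ℂ fun s : ℂ => (Complex.Gamma (1 - s / 2))⁻¹ :=
      Complex.differentiable_one_div_Gamma.comp
        (f := fun s : ℂ => 1 - s / 2) (by fun_prop)
    have h3 : Differentiable ℂ fun s : ℂ => (2 : ℂ) ^ s :=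
      fun s => (differentiableAt_id).const_cpow (Or.inl (by norm_num))
    have h4 : Differentiable ℂ fun s : ℂ => (4 : ℂ) ^ (-(s / 2)) :=
      fun s => DifferentiableAt.const_cpow (by fun_prop) (Or.inl (by norm_num))
    fun_prop
  · intro s hs
    have hG : Complex.Gamma ((1 - s) / 2) ≠ 0 := by
      apply Complex.Gamma_ne_zero
      intro m hm
      apply hs m
      linear_combination (-2 : ℂ) * hm
    have hr := Complex.Gamma_mul_Gamma_one_sub ((1 - s) / 2)
    rw [show (1 : ℂ) - (1 - s) / 2 = (1 + s) / 2 by ring,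
      show (π : ℂ) * ((1 - s) / 2) = π / 2 - π * s / 2 by ring,
      Complex.sin_pi_div_two_sub] at hr
    have hpi : (π : ℂ) ≠ 0 := by exact_mod_cast Real.pi_ne_zero
    have key : (π : ℂ) * (Complex.Gamma ((1 + s) / 2))⁻¹ =
        Complex.cos (π * s / 2) * Complex.Gamma ((1 - s) / 2) := by
      by_cases hc : Complex.cos (π * s / 2) = 0
      · rw [hc, div_zero] at hr
        have h0 := (mul_eq_zero.mp hr).resolve_left hG
        simp [h0, hc]
      · have h0 : Complex.Gamma ((1 + s) / 2) ≠ 0 := by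
          intro h0
          rw [h0, mul_zero] at hr
          exact div_ne_zero hpi hc hr.symm
        rw [eq_div_iff hc] at hr
        rw [← div_eq_mul_inv, div_eq_iff h0]
        linear_combination -hr
    beta_reduce
    rw [key, div_eq_mul_inv _ ((Real.sqrt π : ℂ) * _), mul_inv]
    ring
end

section
/- For every natural number n, the value of the spectral zeta function of ℤ at −n is the central binomial coefficient: 4^{n} Γ(1/2 + n) / (√π · Γ(1 + n)) = C(2n, n) = (n + 1)·Cₙ, where Cₙ = C(2n, n)/(n+1) is the n-th Catalan number; in particular ζ_ℤ(−n) is a positive integer. -/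
open Real

/-- Division-free form of the value at `−n`, by induction on `n`. -/
theorem zetaZ_aux (n : ℕ) :
    (4 : ℂ) ^ n * Complex.Gamma (1 / 2 + n) =
      (Real.sqrt π : ℂ) * (n.factorial : ℂ) * (Nat.centralBinom n : ℂ) := by
  induction n with
  | zero =>
    have h : Complex.Gamma (1 / 2) = ((Real.sqrt π : ℝ) : ℂ) := by
      rw [← Real.Gamma_one_half_eq, ← Complex.Gamma_ofReal]
      norm_num
    simpa using h
  | succ n ih =>
    have hne : (1 / 2 + n : ℂ) ≠ 0 := by
      have h2 : (2 * n + 1 : ℂ) ≠ 0 := by exact_mod_cast Nat.succ_ne_zero (2 * n)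
      intro h
      apply h2
      linear_combination 2 * h
    have hb : ((n : ℂ) + 1) * (Nat.centralBinom (n + 1) : ℂ)
        = 2 * (2 * n + 1) * (Nat.centralBinom n : ℂ) := by
      exact_mod_cast Nat.succ_mul_centralBinom_succ n
    have e : (1 / 2 + ((n + 1 : ℕ) : ℂ)) = (1 / 2 + n) + 1 := by push_cast; ring
    rw [e, Complex.Gamma_add_one _ hne, Nat.factorial_succ]
    push_cast
    linear_combination (4 * (1 / 2 + (n : ℂ))) * ih
      - (Real.sqrt π : ℂ) * (n.factorial : ℂ) * hb

/-- The value of the spectral zeta function of the graph `ℤ` at `−n` is the central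
binomial coefficient: `4^n Γ(1/2 + n) / (√π Γ(1 + n)) = C(2n, n) = (n+1)·Cₙ`, where
`Cₙ` is the `n`-th Catalan number; in particular it is a positive integer. -/
theorem zetaZ_neg_nat (n : ℕ) :
    (4 : ℂ) ^ (n : ℂ) * Complex.Gamma (1 / 2 + n) /
        ((Real.sqrt π : ℂ) * Complex.Gamma (1 + n)) =
      (Nat.choose (2 * n) n : ℂ) ∧
    Nat.choose (2 * n) n = (n + 1) * catalan n ∧
    0 < Nat.choose (2 * n) n := by
  refine ⟨?_, ?_, Nat.choose_pos (by omega)⟩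
  · have hpi : (Real.sqrt π : ℂ) ≠ 0 := by
      exact_mod_cast (Real.sqrt_pos.mpr Real.pi_pos).ne'
    have hf : (n.factorial : ℂ) ≠ 0 := by exact_mod_cast n.factorial_ne_zero
    rw [Complex.cpow_natCast, zetaZ_aux, add_comm (1 : ℂ), Complex.Gamma_nat_eq_factorial,
      mul_div_cancel_left₀ _ (mul_ne_zero hpi hf), Nat.centralBinom_eq_two_mul_choose]
  · rw [succ_mul_catalan_eq_centralBinom, Nat.centralBinom_eq_two_mul_choose]
end

section
/- For every complex number s with 0 < Re(s) < 1/2, ∫₀¹ (2 sin(πx))^{-2s} dx = 4^{-s} Γ(1/2 − s) / (√π · Γ(1 − s)); that is, the spectral-measure integral representation of ζ_ℤ(s) agrees with its Gamma-quotient closed form. -/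
open Real

theorem pw_aux (s : ℂ) (S C : ℝ) (hS : 0 < S) (hC : 0 < C) (h : S ^ 2 + C ^ 2 = 1) :
    ((2 * (2 * S * C) : ℝ) : ℂ) ^ (-(2 * s)) =
      ((4 : ℂ) ^ (-(2 * s)) / π) * ((π * S * C : ℝ) •
        (((S ^ 2 : ℝ) : ℂ) ^ ((1 / 2 - s) - 1) * (1 - ((S ^ 2 : ℝ) : ℂ)) ^ ((1 / 2 - s) - 1))) := by
  have h1 : (1 - ((S ^ 2 : ℝ) : ℂ)) = ((C ^ 2 : ℝ) : ℂ) := by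
    rw [← Complex.ofReal_one, ← h]; push_cast; ring
  have hpi : (π : ℂ) ≠ 0 := by exact_mod_cast Real.pi_ne_zero
  have key : ∀ T : ℝ, 0 < T → (T : ℂ) ^ (-(2 * s)) =
      (T : ℂ) * ((T ^ 2 : ℝ) : ℂ) ^ ((1 / 2 - s) - 1) := by
    intro T hT
    have hT0 : (T : ℂ) ≠ 0 := by exact_mod_cast hT.ne'
    have hT2 : ((T ^ 2 : ℝ) : ℂ) ≠ 0 := by exact_mod_cast (pow_pos hT 2).ne'
    have hl : Complex.log ((T ^ 2 : ℝ) : ℂ) = 2 * Complex.log (T : ℂ) := by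
      rw [← Complex.ofReal_log (by positivity), ← Complex.ofReal_log hT.le, Real.log_pow]
      push_cast; ring
    rw [Complex.cpow_def_of_ne_zero hT0, Complex.cpow_def_of_ne_zero hT2, hl]
    nth_rewrite 2 [← Complex.exp_log hT0]
    rw [← Complex.exp_add]
    congr 1; ring
  have h4 : ((2 * (2 * S * C) : ℝ) : ℂ) = ((4 : ℝ) : ℂ) * (((S * C : ℝ)) : ℂ) := by
    push_cast; ring
  rw [h1, h4, Complex.mul_cpow_ofReal_nonneg (by norm_num) (by positivity), Complex.ofReal_mul,
    Complex.mul_cpow_ofReal_nonneg hS.le hC.le, key S hS, key C hC, Complex.real_smul]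
  push_cast
  field_simp

theorem int_aux (s : ℂ) :
    ∫ x in (0 : ℝ)..1, ((2 * Real.sin (π * x) : ℝ) : ℂ) ^ (-(2 * s)) =
      ((4 : ℂ) ^ (-(2 * s)) / π) * Complex.betaIntegral (1 / 2 - s) (1 / 2 - s) := by
  have hpos : ∀ x ∈ Set.Ioo (0 : ℝ) 1, 0 < Real.sin (π * x / 2) ∧ 0 < Real.cos (π * x / 2) := by
    intro x hx
    have hp := Real.pi_pos
    have a1 : 0 < π * x := mul_pos hp hx.1
    have a2 : π * x < π := by nlinarith [hx.2]
    exact ⟨Real.sin_pos_of_pos_of_lt_pi (by linarith) (by linarith),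
      Real.cos_pos_of_mem_Ioo ⟨by linarith, by linarith⟩⟩
  have sub := intervalIntegral.integral_deriv_smul_comp_of_deriv_nonneg (a := 0) (b := 1)
    (f := fun x : ℝ => Real.sin (π * x / 2) ^ 2)
    (f' := fun x : ℝ => π * Real.sin (π * x / 2) * Real.cos (π * x / 2))
    (g := fun t : ℝ => (t : ℂ) ^ ((1 / 2 - s) - 1) * (1 - (t : ℂ)) ^ ((1 / 2 - s) - 1))
    (by fun_prop)
    (by
      intro x _
      have h1 : HasDerivAt (fun x : ℝ => π * x / 2) (π / 2) x := by
        simpa using ((hasDerivAt_id x).const_mul π).div_const 2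
      convert! (h1.sin.pow 2) using 1
      ring)
    (by
      intro x hx
      have := hpos x (by simpa using hx)
      have h1 := this.1
      have h2 := this.2
      positivity)
  simp only [mul_zero, zero_div, Real.sin_zero, mul_one, Real.sin_pi_div_two, one_pow,
    ne_eq, OfNat.ofNat_ne_zero, not_false_eq_true, zero_pow] at sub
  rw [Complex.betaIntegral, ← sub, ← intervalIntegral.integral_const_mul]
  apply intervalIntegral.integral_congr_Ioo_of_le zero_le_one
  intro x hx
  have e : Real.sin (π * x) = 2 * Real.sin (π * x / 2) * Real.cos (π * x / 2) := by
    rw [← Real.sin_two_mul]; congr 1; ring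
  simp only [e, Function.comp_apply]
  exact pw_aux s _ _ (hpos x hx).1 (hpos x hx).2 (Real.sin_sq_add_cos_sq _)

/-- Spectral-measure integral representation of the spectral zeta function of the
graph `ℤ`: for `0 < Re s < 1/2`,
`∫₀¹ (2 sin(πx))^{-2s} dx = 4^{-s} Γ(1/2 − s) / (√π Γ(1 − s))`. -/
theorem zetaZ_spectral_measure_integral (s : ℂ) (h0 : 0 < s.re) (h1 : s.re < 1 / 2) :
    ∫ x in (0 : ℝ)..1, ((2 * Real.sin (π * x) : ℝ) : ℂ) ^ (-(2 * s)) =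
      (4 : ℂ) ^ (-s) * Complex.Gamma (1 / 2 - s) /
        ((Real.sqrt π : ℂ) * Complex.Gamma (1 - s)) := by
  rw [int_aux]
  have hre : 0 < (1 / 2 - s : ℂ).re := by
    simp; linarith
  have hB := Complex.Gamma_mul_Gamma_eq_betaIntegral hre hre
  have hD := Complex.Gamma_mul_Gamma_add_half (1 / 2 - s)
  rw [show (1 / 2 - s + 1 / 2 : ℂ) = 1 - s by ring,
    show (2 * (1 / 2 - s) : ℂ) = 1 - 2 * s by ring,
    show (1 - (1 - 2 * s) : ℂ) = s + s by ring] at hD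
  rw [show (1 / 2 - s + (1 / 2 - s) : ℂ) = 1 - 2 * s by ring] at hB
  have g1 : Complex.Gamma (1 - s) ≠ 0 :=
    Complex.Gamma_ne_zero_of_re_pos (by simp; linarith)
  have g2 : Complex.Gamma (1 - 2 * s) ≠ 0 :=
    Complex.Gamma_ne_zero_of_re_pos (by simp; linarith)
  have hpi : (π : ℂ) = (Real.sqrt π : ℂ) * (Real.sqrt π : ℂ) := by
    rw [← Complex.ofReal_mul, Real.mul_self_sqrt Real.pi_pos.le]
  have hsq : (Real.sqrt π : ℂ) ≠ 0 := by
    exact_mod_cast (Real.sqrt_pos.mpr Real.pi_pos).ne'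
  have h2 : (2 : ℂ) ^ s ≠ 0 := by simp [Complex.cpow_eq_zero_iff]
  have h4 : (4 : ℂ) ^ s = (2 : ℂ) ^ s * (2 : ℂ) ^ s := by
    have := Complex.mul_cpow_ofReal_nonneg (a := 2) (b := 2) (by norm_num) (by norm_num) s
    norm_num at this
    exact this
  have h42 : (4 : ℂ) ^ (2 * s) = (4 : ℂ) ^ s * (4 : ℂ) ^ s := by
    rw [two_mul, Complex.cpow_add _ _ (by norm_num)]
  rw [Complex.cpow_add _ _ (by norm_num)] at hD
  rw [Complex.cpow_neg, Complex.cpow_neg, h42, h4, hpi]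
  have hB' : Complex.betaIntegral (1 / 2 - s) (1 / 2 - s) =
      Complex.Gamma (1 / 2 - s) * Complex.Gamma (1 / 2 - s) / Complex.Gamma (1 - 2 * s) := by
    rw [eq_div_iff g2, hB]; ring
  rw [hB']
  generalize Complex.Gamma (1 / 2 - s) = G at *
  generalize Complex.Gamma (1 - s) = H at *
  generalize Complex.Gamma (1 - 2 * s) = K at *
  generalize (2 : ℂ) ^ s = w at *
  have hG : G = K * (w * w) * (Real.sqrt π : ℂ) / H := by
    rw [eq_div_iff g1, hD]
  rw [hG]
  field_simp
end

section
/- (1/(4π²)) ∫₀^{2π} ∫₀^{2π} log(4 − 2 cos x − 2 cos y) dx dy = (4/π) G, where G = Σ_{n=0}^∞ (−1)ⁿ/(2n+1)² is Catalan's constant; that is, the logarithm of the Fuglede–Kadison determinant of the Laplacian of the graph ℤ² equals (4/π) times Catalan's constant. -/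
open MeasureTheory Real

/-- Catalan's constant `G = Σ_{n=0}^∞ (−1)ⁿ/(2n+1)²`. -/
noncomputable def catalanConstant : ℝ :=
  ∑' n : ℕ, (-1) ^ n / (2 * (n : ℝ) + 1) ^ 2


lemma inner_integral (x : ℝ) :
    ∫ y in (0 : ℝ)..(2 * π), Real.log (4 - 2 * Real.cos x - 2 * Real.cos y) =
      2 * π * (2 * arsinh |sin (x / 2)|) := by
  set s := |sin (x / 2)| with hs
  set u := arsinh s with hu
  have hu0 : 0 ≤ u := arsinh_nonneg_iff.2 (abs_nonneg _)
  set a := exp (2 * u) with ha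
  have ha0 : 0 < a := exp_pos _
  have ha1 : 1 ≤ a := by
    rw [ha]; exact one_le_exp (by linarith)
  have hx : cos x = 1 - 2 * s ^ 2 := by
    rw [hs, sq_abs]
    have h1 := cos_two_mul' (x / 2)
    have h2 := sin_sq_add_cos_sq (x / 2)
    rw [show 2 * (x / 2) = x by ring] at h1
    linarith
  have haa : a * (4 - 2 * cos x) = a ^ 2 + 1 := by
    have h1 : cosh (2 * u) = 1 + 2 * s ^ 2 := by
      rw [cosh_two_mul, cosh_sq, hu, sinh_arsinh]; ring
    have h2 : cosh (2 * u) = (a + a⁻¹) / 2 := by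
      rw [cosh_eq, ha, exp_neg]
    have h3 : a * a⁻¹ = 1 := mul_inv_cancel₀ ha0.ne'
    rw [hx]
    linear_combination (-2 * a) * h1 + 2 * a * h2 + h3
  have hnorm : ∀ y : ℝ, ‖circleMap 0 1 y - (a : ℂ)‖ ^ 2 = a * (4 - 2 * cos x - 2 * cos y) := by
    intro y
    rw [← Complex.normSq_eq_norm_sq, Complex.normSq_apply]
    simp only [circleMap, Complex.sub_re, Complex.sub_im, Complex.add_re, Complex.add_im,
      Complex.zero_re, Complex.zero_im, Complex.ofReal_one, one_mul, Complex.exp_ofReal_mul_I_re,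
      Complex.exp_ofReal_mul_I_im, Complex.ofReal_re, Complex.ofReal_im]
    have h2 := sin_sq_add_cos_sq y
    linear_combination h2 - haa
  have hlog : ∀ y : ℝ, log (4 - 2 * cos x - 2 * cos y) =
      2 * log ‖circleMap 0 1 y - (a : ℂ)‖ - 2 * u := by
    intro y
    have hn := hnorm y
    have h2 : 2 * log ‖circleMap 0 1 y - (a : ℂ)‖ = log (a * (4 - 2 * cos x - 2 * cos y)) := by
      rw [← hn, log_pow]; norm_num
    rw [h2]
    by_cases h0 : 4 - 2 * cos x - 2 * cos y = 0
    · have hc : cos x = 1 := by linarith [cos_le_one x, cos_le_one y]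
      have : s = 0 := by
        have : s ^ 2 = 0 := by linarith
        exact pow_eq_zero_iff (two_ne_zero) |>.1 this
      have : u = 0 := by rw [hu, this, arsinh_zero]
      rw [h0, this]; simp
    · rw [log_mul ha0.ne' h0, ha, log_exp]; ring
  have hint : IntervalIntegrable (fun y => log ‖circleMap 0 1 y - (a : ℂ)‖) volume 0 (2 * π) :=
    circleIntegrable_log_norm_sub_const (a := (a : ℂ)) (c := 0) 1
  have havg := circleAverage_log_norm_sub_const_eq_posLog (a := (a : ℂ))
  rw [circleAverage_def, smul_eq_mul, Complex.norm_real, norm_of_nonneg ha0.le,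
    posLog_eq_log (by rwa [abs_of_pos ha0]), ha, log_exp, ← ha] at havg
  have hpi : (2 * π) ≠ 0 := by positivity
  have h3 : ∫ y in (0:ℝ)..(2 * π), log ‖circleMap 0 1 y - (a : ℂ)‖ = 2 * π * (2 * u) := by
    rw [← havg]; field_simp
  simp_rw [hlog]
  rw [intervalIntegral.integral_sub (hint.const_mul 2) (by simp),
    intervalIntegral.integral_const_mul, h3]
  simp
  ring

lemma cont_kernel : Continuous (fun p : ℝ × ℝ => sin p.1 / √(1 + p.2 ^ 2 * sin p.1 ^ 2)) := by
  refine Continuous.div (by fun_prop) (by fun_prop) ?_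
  intro p
  positivity

lemma integral_k (t : ℝ) :
    ∫ k in (0:ℝ)..1, sin t / √(1 + k ^ 2 * sin t ^ 2) = arsinh (sin t) := by
  rw [intervalIntegral.integral_eq_sub_of_hasDerivAt (f := fun k => arsinh (k * sin t))]
  · simp
  · intro k _
    have := ((hasDerivAt_id k).mul_const (sin t)).arsinh
    refine this.congr_deriv ?_
    simp [mul_pow]
    ring
  · exact (cont_kernel.comp (by fun_prop : Continuous fun k : ℝ => (t, k))).intervalIntegrable _ _

lemma integral_t (k : ℝ) (hk : k ≠ 0) :
    ∫ t in (0:ℝ)..(π / 2), sin t / √(1 + k ^ 2 * sin t ^ 2) = arctan k / k := by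
  rw [intervalIntegral.integral_eq_sub_of_hasDerivAt
    (f := fun t => - (arctan (k * cos t / √(1 + k ^ 2 * sin t ^ 2)) / k))]
  · simp
  · intro t _
    have hpos : 0 < 1 + k ^ 2 * sin t ^ 2 := by positivity
    have hw := ((((hasDerivAt_sin t).pow 2).const_mul (k ^ 2)).const_add 1).sqrt hpos.ne'
    have := ((((hasDerivAt_cos t).const_mul k).div hw (sqrt_pos.2 hpos).ne').arctan.div_const k).neg
    refine HasDerivAt.congr_deriv this ?_
    symm
    set w := √(1 + k ^ 2 * sin t ^ 2) with hwd
    have hw0 : 0 < w := sqrt_pos.2 hpos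
    have hw2 : w ^ 2 = 1 + k ^ 2 * sin t ^ 2 := sq_sqrt hpos.le
    simp only [Pi.pow_apply, Pi.div_apply]
    change _ = -(1 / (1 + (k * cos t / w) ^ 2) * ((k * -sin t * w - k * cos t *
      (k ^ 2 * (((2 : ℕ) : ℝ) * sin t ^ (2 - 1) * cos t) / (2 * w))) / w ^ 2) / k)
    have h1 : 1 + (k * cos t / w) ^ 2 = (w ^ 2 + k ^ 2 * cos t ^ 2) / w ^ 2 := by
      field_simp
    have h2 : 0 < w ^ 2 + k ^ 2 * cos t ^ 2 := by positivity
    rw [h1]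
    field_simp
    push_cast
    ring
  · exact (cont_kernel.comp (by fun_prop : Continuous fun t : ℝ => (t, k))).intervalIntegrable _ _

lemma integral_arctan_div : ∫ k in (0:ℝ)..1, arctan k / k = catalanConstant := by
  have hInt : ∀ n : ℕ, ∫ k in Set.Ioo (0:ℝ) 1, k ^ (2 * n) / (2 * (n:ℝ) + 1)
      = 1 / (2 * (n:ℝ) + 1) ^ 2 := by
    intro n
    rw [← integral_Ioc_eq_integral_Ioo, ← intervalIntegral.integral_of_le zero_le_one,
      intervalIntegral.integral_div, integral_pow]
    have : (2 * (n:ℝ) + 1) ≠ 0 := by positivity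
    push_cast
    simp
    field_simp
  have hs : Summable fun n : ℕ => 1 / (2 * (n:ℝ) + 1) ^ 2 := by
    have h := (Real.summable_one_div_nat_pow (p := 2)).2 (by norm_num)
    have := h.comp_injective (i := fun n : ℕ => 2 * n + 1) (fun a b h => by simpa using h)
    refine this.congr fun n => ?_
    simp
  have key := hasSum_integral_of_summable_integral_norm
    (μ := volume.restrict (Set.Ioo (0:ℝ) 1))
    (F := fun (n : ℕ) (k : ℝ) => (-1) ^ n * (k ^ (2 * n) / (2 * (n:ℝ) + 1))) ?_ ?_
  · rw [intervalIntegral.integral_of_le zero_le_one, integral_Ioc_eq_integral_Ioo,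
      catalanConstant]
    have e : ∫ k in Set.Ioo (0:ℝ) 1, arctan k / k = ∫ k in Set.Ioo (0:ℝ) 1,
        ∑' n : ℕ, (-1) ^ n * (k ^ (2 * n) / (2 * (n:ℝ) + 1)) := by
      refine setIntegral_congr_fun measurableSet_Ioo fun k hk => ?_
      have hk0 : k ≠ 0 := hk.1.ne'
      have h := (Real.hasSum_arctan (x := k) (by
        rw [norm_of_nonneg hk.1.le]; exact hk.2)).div_const k
      rw [← h.tsum_eq]
      congr 1
      ext n
      push_cast
      field_simp
      ring
    rw [e, ← key.tsum_eq]
    congr 1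
    ext n
    rw [integral_const_mul, hInt]
    ring
  · intro n
    refine Integrable.mono_measure (ν := volume.restrict (Set.Icc (0:ℝ) 1)) ?_
      (Measure.restrict_mono Set.Ioo_subset_Icc_self le_rfl)
    exact Continuous.integrableOn_Icc (by fun_prop)
  · refine hs.congr fun n => ?_
    rw [← hInt n]
    refine setIntegral_congr_fun measurableSet_Ioo fun k hk => ?_
    have := hk.1
    simp only [norm_mul, norm_pow, norm_neg, norm_one, one_pow, one_mul]
    rw [norm_of_nonneg (by positivity)]

lemma integral_arsinh_sin : ∫ t in (0:ℝ)..(π / 2), arsinh (sin t) = catalanConstant := by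
  rw [← integral_arctan_div]
  simp_rw [← integral_k]
  rw [MeasureTheory.intervalIntegral_intervalIntegral_swap]
  · refine intervalIntegral.integral_congr_ae (ae_of_all _ fun k hk => ?_)
    rw [Set.uIoc_of_le zero_le_one] at hk
    exact integral_t k hk.1.ne'
  · refine IntegrableOn.mono_set (t := Set.uIcc 0 (π/2) ×ˢ Set.uIcc 0 1) ?_
      (Set.prod_mono Set.uIoc_subset_uIcc Set.uIoc_subset_uIcc)
    exact cont_kernel.continuousOn.integrableOn_compact (isCompact_uIcc.prod isCompact_uIcc)

/-- The logarithm of the Fuglede–Kadison determinant of the Laplacian of the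
lattice graph `ℤ²` equals `(4/π)` times Catalan's constant:
`(1/4π²) ∫₀^{2π} ∫₀^{2π} log(4 − 2cos x − 2cos y) dx dy = (4/π) G`. -/
theorem logDet_Z2_eq_catalan :
    (1 / (4 * π ^ 2)) *
        ∫ x in (0 : ℝ)..(2 * π), ∫ y in (0 : ℝ)..(2 * π),
          Real.log (4 - 2 * Real.cos x - 2 * Real.cos y) =
      (4 / π) * catalanConstant := by
  simp_rw [inner_integral]
  rw [intervalIntegral.integral_const_mul, intervalIntegral.integral_const_mul,
    intervalIntegral.integral_comp_div (f := fun t => arsinh |sin t|) two_ne_zero]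
  have hc : Continuous fun t : ℝ => arsinh |sin t| :=
    continuous_arsinh.comp continuous_sin.abs
  have h1 : ∫ t in (0:ℝ)..(π / 2), arsinh |sin t| = catalanConstant := by
    rw [← integral_arsinh_sin]
    refine intervalIntegral.integral_congr fun t ht => ?_
    rw [Set.uIcc_of_le (by positivity)] at ht
    rw [abs_of_nonneg (sin_nonneg_of_nonneg_of_le_pi ht.1 (by linarith [ht.2, pi_pos]))]
  have h2 : ∫ t in (π / 2)..π, arsinh |sin t| = catalanConstant := by
    rw [← h1]
    have := intervalIntegral.integral_comp_sub_left (a := 0) (b := π / 2)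
      (fun t => arsinh |sin t|) π
    simp only [sin_pi_sub] at this
    rw [this]
    congr 1 <;> ring
  have h3 : ∫ t in (0:ℝ)..π, arsinh |sin t| = 2 * catalanConstant := by
    rw [← intervalIntegral.integral_add_adjacent_intervals (b := π / 2)
      (hc.intervalIntegrable _ _) (hc.intervalIntegrable _ _), h1, h2]
    ring
  rw [zero_div, mul_div_cancel_left₀ π two_ne_zero, h3, smul_eq_mul]
  field_simp
  ring
end

section
/- Let p be a prime. For every x ∈ ℚ_p with x ≠ 0 and every t > 0, Σ_{k=−∞}^{∞} (e^{-t p^{2k}} − e^{-t p^{2k+2}}) p^k 𝟙[|x|_p ≤ p^{-k}] = Σ_{m=0}^∞ ((−1)^m t^m / m!) · ((1 − p^{2m})/(1 − p^{-2m-1})) · |x|_p^{-2m-1}; that is, the two expressions for the heat kernel K_p(x, t) of the Taibleson–Vladimirov Laplacian on ℚ_p agree for x ≠ 0. -/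
open Real


lemma hk_exp_hasSum (y : ℝ) : HasSum (fun m : ℕ => y ^ m / (Nat.factorial m : ℝ)) (Real.exp y) := by
  rw [Real.exp_eq_exp_ℝ]
  exact NormedSpace.expSeries_div_hasSum_exp y

lemma hk_real (P a t : ℝ) (hP : 1 < P) (ha : 0 < a) (ht : 0 < t) :
    ∑' j : ℕ, (Real.exp (-t * (a * P⁻¹ ^ j) ^ 2) - Real.exp (-t * (P * (a * P⁻¹ ^ j)) ^ 2)) *
        (a * P⁻¹ ^ j) =
      ∑' m : ℕ, ((-1) ^ m * t ^ m / (Nat.factorial m : ℝ)) *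
        ((1 - P ^ (2 * m)) / (1 - P⁻¹ ^ (2 * m + 1))) * a ^ (2 * m + 1) := by
  have hP0 : 0 < P := by linarith
  have hq0 : 0 < P⁻¹ := by positivity
  have hq1 : P⁻¹ < 1 := inv_lt_one_of_one_lt₀ hP
  let F : ℕ → ℕ → ℝ := fun j m =>
    ((-1) ^ m * t ^ m / (Nat.factorial m : ℝ)) * (1 - P ^ (2 * m)) * a ^ (2 * m + 1) *
      (P⁻¹ ^ (2 * m + 1)) ^ j
  have hsum : Summable (Function.uncurry F) := by
    have h1 : Summable (fun j : ℕ => P⁻¹ ^ j) := summable_geometric_of_lt_one hq0.le hq1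
    have h2 : Summable (fun m : ℕ => a * ((t * P ^ 2 * a ^ 2) ^ m / (Nat.factorial m : ℝ))) :=
      (hk_exp_hasSum _).summable.mul_left a
    have h3 := h1.mul_of_nonneg h2 (fun j => by positivity) (fun m => by positivity)
    refine Summable.of_norm_bounded h3 ?_
    rintro ⟨j, m⟩
    simp only [Function.uncurry, F, norm_mul, norm_div, norm_pow, norm_neg, norm_one, one_pow,
      one_mul, Real.norm_of_nonneg ht.le, Real.norm_of_nonneg ha.le, Real.norm_of_nonneg hq0.le,
      Real.norm_natCast]
    have e1 : ‖1 - P ^ (2 * m)‖ ≤ P ^ (2 * m) := by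
      have : 1 ≤ P ^ (2 * m) := one_le_pow₀ hP.le
      rw [Real.norm_eq_abs, abs_le]
      constructor <;> linarith
    have e2 : (P⁻¹ ^ (2 * m + 1)) ^ j ≤ P⁻¹ ^ j := by
      apply pow_le_pow_left₀ (by positivity)
      exact pow_le_of_le_one hq0.le hq1.le (by omega)
    calc t ^ m / (Nat.factorial m : ℝ) * ‖1 - P ^ (2 * m)‖ * a ^ (2 * m + 1) *
          (P⁻¹ ^ (2 * m + 1)) ^ j
        ≤ t ^ m / (Nat.factorial m : ℝ) * P ^ (2 * m) * a ^ (2 * m + 1) * P⁻¹ ^ j := by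
          gcongr
      _ = P⁻¹ ^ j * (a * ((t * P ^ 2 * a ^ 2) ^ m / (Nat.factorial m : ℝ))) := by
          rw [mul_pow, mul_pow, ← pow_mul, ← pow_mul]; ring
  have hc := hsum.tsum_comm
  have hL : ∀ j, ∑' m, F j m =
      (Real.exp (-t * (a * P⁻¹ ^ j) ^ 2) - Real.exp (-t * (P * (a * P⁻¹ ^ j)) ^ 2)) *
        (a * P⁻¹ ^ j) := by
    intro j
    refine HasSum.tsum_eq ?_
    have := ((hk_exp_hasSum (-t * (a * P⁻¹ ^ j) ^ 2)).sub
      (hk_exp_hasSum (-t * (P * (a * P⁻¹ ^ j)) ^ 2))).mul_right (a * P⁻¹ ^ j)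
    refine Eq.subst (motive := fun f => HasSum f _) (funext fun m => ?_) this
    symm
    simp only [F]
    have e : (P⁻¹ ^ (2 * m + 1)) ^ j = (P⁻¹ ^ j) ^ (2 * m + 1) := by
      rw [← pow_mul, ← pow_mul, mul_comm]
    rw [e]
    generalize P⁻¹ ^ j = b
    rw [neg_mul, neg_mul, neg_pow (t * _), neg_pow (t * _), mul_pow t, mul_pow t, ← pow_mul,
      ← pow_mul, mul_pow P, mul_pow a]
    ring
  have hR : ∀ m, ∑' j, F j m = ((-1) ^ m * t ^ m / (Nat.factorial m : ℝ)) *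
        ((1 - P ^ (2 * m)) / (1 - P⁻¹ ^ (2 * m + 1))) * a ^ (2 * m + 1) := by
    intro m
    simp only [F]
    rw [tsum_mul_left, tsum_geometric_of_lt_one (by positivity)
      (pow_lt_one₀ hq0.le hq1 (by omega))]
    ring
  simp only [hL, hR] at hc
  first | exact hc | exact hc.symm

/-- The two expressions for the heat kernel of the Taibleson–Vladimirov Laplacian
on `ℚ_p` agree for `x ≠ 0` and `t > 0`:
`Σ_{k∈ℤ} (e^{-tp^{2k}} − e^{-tp^{2k+2}}) p^k 𝟙[|x|_p ≤ p^{-k}]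
  = Σ_{m≥0} ((−1)^m t^m/m!) ((1 − p^{2m})/(1 − p^{-2m-1})) |x|_p^{-2m-1}`. -/
theorem padic_heat_kernel_identity (p : ℕ) [Fact p.Prime] (x : ℚ_[p]) (hx : x ≠ 0)
    (t : ℝ) (ht : 0 < t) :
    ∑' k : ℤ,
        (Real.exp (-t * (p : ℝ) ^ (2 * k)) - Real.exp (-t * (p : ℝ) ^ (2 * k + 2))) *
          (p : ℝ) ^ k * (if ‖x‖ ≤ (p : ℝ) ^ (-k) then 1 else 0) =
      ∑' m : ℕ,
        ((-1) ^ m * t ^ m / Nat.factorial m) *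
          ((1 - (p : ℝ) ^ (2 * m)) / (1 - (p : ℝ) ^ (-(2 * (m : ℤ) + 1)))) *
          ‖x‖ ^ (-(2 * (m : ℤ) + 1)) := by
  have hp : 1 < (p : ℝ) := by exact_mod_cast (Fact.out : p.Prime).one_lt
  have hp0 : (p : ℝ) ≠ 0 := by positivity
  have hn : ‖x‖ = (p : ℝ) ^ (-x.valuation) := Padic.norm_eq_zpow_neg_valuation hx
  generalize x.valuation = n at hn
  rw [hn]
  have key := hk_real p ((p : ℝ) ^ n) t hp (by positivity) ht
  have hinj : Function.Injective (fun j : ℕ => n - (j : ℤ)) := by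
    intro i j h
    simp only at h
    omega
  rw [← hinj.tsum_eq]
  · convert key using 1
    · refine tsum_congr fun j => ?_
      have e : (p : ℝ) ^ (n - (j : ℤ)) = (p : ℝ) ^ n * (p : ℝ)⁻¹ ^ j := by
        rw [zpow_sub₀ hp0, zpow_natCast, inv_pow, div_eq_mul_inv]
      rw [if_pos (zpow_le_zpow_right₀ hp.le (by omega)), ← e, mul_one]
      have e2 : (p : ℝ) ^ (2 * (n - (j : ℤ))) = ((p : ℝ) ^ (n - (j : ℤ))) ^ 2 := by
        rw [mul_comm, zpow_mul]; norm_cast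
      rw [zpow_add₀ hp0, e2, mul_pow, mul_comm ((p : ℝ) ^ 2)]
      norm_cast
    · refine tsum_congr fun m => ?_
      have e1 : (p : ℝ) ^ (-(2 * (m : ℤ) + 1)) = (p : ℝ)⁻¹ ^ (2 * m + 1) := by
        rw [zpow_neg, inv_pow]; norm_cast
      have e2 : ((p : ℝ) ^ (-n)) ^ (-(2 * (m : ℤ) + 1)) = ((p : ℝ) ^ n) ^ (2 * m + 1) := by
        rw [zpow_neg, zpow_neg, inv_zpow, inv_inv]; norm_cast
      rw [e1, e2]
  · intro k hk
    by_cases h : k ≤ n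
    · exact ⟨(n - k).toNat, by simp only; omega⟩
    · exfalso
      apply hk
      simp only
      rw [if_neg, mul_zero]
      rw [not_le]
      exact zpow_lt_zpow_right₀ hp (by omega)
end

section
/- Let p be a prime, let x ∈ ℚ_p with x ≠ 0, and let s be a real number with s > (p/|x|_p)². Then (1/(s|x|_p)) Σ_{m=0}^∞ ((−1)^m/(s^m |x|_p^{2m})) · ((1 − p^{2m})/(1 − p^{-2m-1})) = Σ_{k=−∞}^{∞} ((p² − 1)/((1 + p^{2k} s)(p² + p^{2k} s))) · p^k · 𝟙[|x|_p ≤ p^{k}]. -/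
open Real

lemma padic_laplace_aux_main (P r s : ℝ) (hP : 1 < P) (hr : 0 < r) (hs : (P / r) ^ 2 < s) :
    (1 / (s * r)) * ∑' m : ℕ, ((-1) ^ m / (s ^ m * r ^ (2 * m))) *
            ((1 - P ^ (2 * m)) / (1 - P ^ (-(2 * (m : ℤ) + 1)))) =
      ∑' j : ℕ, ((P ^ 2 - 1) / ((1 + (r * P ^ j) ^ 2 * s) * (P ^ 2 + (r * P ^ j) ^ 2 * s))) *
          (r * P ^ j) := by
  have hP0 : 0 < P := by linarith
  have hs0 : 0 < s := lt_of_le_of_lt (sq_nonneg _) hs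
  have hsr : P ^ 2 < s * r ^ 2 := by
    rw [div_pow, div_lt_iff₀ (by positivity)] at hs
    exact hs
  obtain ⟨v, hv⟩ : ∃ v, v = 1 / (s * r ^ 2) := ⟨_, rfl⟩
  obtain ⟨w, hw⟩ : ∃ w, w = 1 / P := ⟨_, rfl⟩
  have hv0 : 0 < v := by rw [hv]; positivity
  have hw0 : 0 < w := by rw [hw]; positivity
  have hw1 : w < 1 := by rw [hw, div_lt_one hP0]; exact hP
  have hPv : P ^ 2 * v < 1 := by
    rw [hv, mul_one_div, div_lt_one (by positivity)]; exact hsr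
  have hPv0 : 0 < P ^ 2 * v := by positivity
  have hv1 : v < 1 := by nlinarith
  let F : ℕ → ℕ → ℝ := fun m j => r * v * ((-v) ^ m * (1 - P ^ (2 * m))) * (w ^ (2 * m + 1)) ^ j
  have hsum : Summable (Function.uncurry F) := by
    have h1 : Summable (fun m : ℕ => (P ^ 2 * v) ^ m) :=
      summable_geometric_of_lt_one hPv0.le hPv
    have h2 : Summable (fun j : ℕ => w ^ j) := summable_geometric_of_lt_one hw0.le hw1
    have h3 := (h1.mul_of_nonneg h2 (fun m => by positivity) (fun m => by positivity)).mul_left (r * v)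
    refine Summable.of_norm_bounded h3 ?_
    rintro ⟨m, j⟩
    have e1 : |1 - P ^ (2 * m)| ≤ P ^ (2 * m) := by
      have : 1 ≤ P ^ (2 * m) := one_le_pow₀ hP.le
      rw [abs_le]; constructor <;> linarith
    have e2 : (w ^ (2 * m + 1)) ^ j ≤ w ^ j := by
      apply pow_le_pow_left₀ (by positivity)
      exact pow_le_of_le_one hw0.le hw1.le (by omega)
    simp only [Function.uncurry, F, Real.norm_eq_abs, abs_mul, abs_pow, abs_neg, abs_of_pos hr,
      abs_of_pos hv0, abs_of_pos hw0]
    calc r * v * (v ^ m * |1 - P ^ (2 * m)|) * (w ^ (2 * m + 1)) ^ j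
        ≤ r * v * (v ^ m * P ^ (2 * m)) * w ^ j := by gcongr
      _ = r * v * ((P ^ 2 * v) ^ m * w ^ j) := by rw [mul_pow, ← pow_mul]; ring
  have hcomm : ∑' j, ∑' m, F m j = ∑' m, ∑' j, F m j := hsum.tsum_comm
  have hL : ∀ m : ℕ, (1 / (s * r)) * (((-1) ^ m / (s ^ m * r ^ (2 * m))) *
      ((1 - P ^ (2 * m)) / (1 - P ^ (-(2 * (m : ℤ) + 1))))) = ∑' j, F m j := by
    intro m
    have e1 : P ^ (-(2 * (m : ℤ) + 1)) = w ^ (2 * m + 1) := by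
      rw [hw, one_div, inv_pow, zpow_neg]; norm_cast
    have e2 : w ^ (2 * m + 1) < 1 := pow_lt_one₀ hw0.le hw1 (by omega)
    have e3 : (-1 : ℝ) ^ m / (s ^ m * r ^ (2 * m)) = (-v) ^ m := by
      rw [pow_mul, ← mul_pow, ← div_pow, hv]; congr 1; ring
    have e4 : 1 / (s * r) = r * v := by rw [hv]; field_simp
    simp only [F]
    rw [tsum_mul_left, tsum_geometric_of_lt_one (by positivity) e2, e1, e3, e4, div_eq_mul_inv]
    ring
  have hR : ∀ j : ℕ, ((P ^ 2 - 1) / ((1 + (r * P ^ j) ^ 2 * s) * (P ^ 2 + (r * P ^ j) ^ 2 * s))) *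
          (r * P ^ j) = ∑' m, F m j := by
    intro j
    obtain ⟨u, hu⟩ : ∃ u, u = v * (w ^ j) ^ 2 := ⟨_, rfl⟩
    have hu0 : 0 < u := by rw [hu]; positivity
    have huv : u ≤ v := by
      rw [hu]
      exact mul_le_of_le_one_right hv0.le (pow_le_one₀ (by positivity) (pow_le_one₀ hw0.le hw1.le))
    have hPu : P ^ 2 * u < 1 := lt_of_le_of_lt (by gcongr) hPv
    have hPu0 : 0 < P ^ 2 * u := by positivity
    have hF : ∀ m, F m j = r * v * w ^ j * ((-u) ^ m - (-(P ^ 2 * u)) ^ m) := by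
      intro m
      simp only [F]
      have a1 : (-u) ^ m = (-v) ^ m * (w ^ j) ^ (2 * m) := by
        rw [hu, pow_mul, ← mul_pow]; ring
      have a2 : (-(P ^ 2 * u)) ^ m = P ^ (2 * m) * (-u) ^ m := by
        rw [pow_mul, ← mul_pow]; ring
      rw [a2, a1, ← pow_mul, ← pow_mul]
      ring
    have s1 : |-u| < 1 := by rw [abs_neg, abs_of_pos hu0]; linarith
    have s2 : |-(P ^ 2 * u)| < 1 := by rw [abs_neg, abs_of_pos hPu0]; exact hPu
    rw [tsum_congr hF, tsum_mul_left,
      Summable.tsum_sub (summable_geometric_of_abs_lt_one s1) (summable_geometric_of_abs_lt_one s2),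
      tsum_geometric_of_abs_lt_one s1, tsum_geometric_of_abs_lt_one s2]
    have ha : (r * P ^ j) ^ 2 * s = 1 / u := by
      rw [hu, hv, hw, one_div_pow]; field_simp
    have hwj : r * v * w ^ j = u * (r * P ^ j) := by
      rw [hu, hw, one_div_pow]; field_simp
    have hn1 : 1 + u ≠ 0 := by positivity
    have hn2 : 1 + P ^ 2 * u ≠ 0 := by positivity
    rw [ha, hwj, sub_neg_eq_add, sub_neg_eq_add]
    have hu' := hu0.ne'
    have b1 : 1 + 1 / u = (1 + u) / u := by field_simp; ring
    have b2 : P ^ 2 + 1 / u = (1 + P ^ 2 * u) / u := by field_simp; ring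
    rw [b1, b2]
    field_simp
    ring
  rw [← tsum_mul_left, tsum_congr hL, tsum_congr hR, hcomm]

/-- Nilsson's Laplace-transform identity for the heat kernel of the
Taibleson–Vladimirov Laplacian on `ℚ_p`: for `x ≠ 0` and real `s > (p/|x|_p)²`,
`(1/(s|x|_p)) Σ_{m≥0} ((−1)^m/(s^m |x|_p^{2m})) (1 − p^{2m})/(1 − p^{-2m-1})
  = Σ_{k∈ℤ} ((p² − 1)/((1 + p^{2k}s)(p² + p^{2k}s))) p^k 𝟙[|x|_p ≤ p^k]`. -/
theorem padic_laplace_transform_identity (p : ℕ) [Fact p.Prime] (x : ℚ_[p]) (hx : x ≠ 0)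
    (s : ℝ) (hs : ((p : ℝ) / ‖x‖) ^ 2 < s) :
    (1 / (s * ‖x‖)) *
        ∑' m : ℕ,
          ((-1) ^ m / (s ^ m * ‖x‖ ^ (2 * m))) *
            ((1 - (p : ℝ) ^ (2 * m)) / (1 - (p : ℝ) ^ (-(2 * (m : ℤ) + 1)))) =
      ∑' k : ℤ,
        (((p : ℝ) ^ 2 - 1) / ((1 + (p : ℝ) ^ (2 * k) * s) * ((p : ℝ) ^ 2 + (p : ℝ) ^ (2 * k) * s))) *
          (p : ℝ) ^ k * (if ‖x‖ ≤ (p : ℝ) ^ k then 1 else 0) := by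
  have hp : 1 < (p : ℝ) := by exact_mod_cast (Fact.out : p.Prime).one_lt
  have hp0 : (p : ℝ) ≠ 0 := by positivity
  have hr : 0 < ‖x‖ := norm_pos_iff.mpr hx
  rw [padic_laplace_aux_main (p : ℝ) ‖x‖ s hp hr hs]
  obtain ⟨n, hn⟩ : ∃ n : ℤ, ‖x‖ = (p : ℝ) ^ n := ⟨_, Padic.norm_eq_zpow_neg_valuation hx⟩
  have hinj : Function.Injective (fun j : ℕ => n + (j : ℤ)) := by
    intro a b h
    simpa using h
  rw [← hinj.tsum_eq]
  · apply tsum_congr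
    intro j
    have e : (p : ℝ) ^ (n + (j : ℤ)) = ‖x‖ * (p : ℝ) ^ j := by
      rw [zpow_add₀ hp0, hn, zpow_natCast]
    have e2 : (p : ℝ) ^ (2 * (n + (j : ℤ))) = (‖x‖ * (p : ℝ) ^ j) ^ 2 := by
      rw [← e, mul_comm, zpow_mul]; norm_cast
    have hle : ‖x‖ ≤ ‖x‖ * (p : ℝ) ^ j := le_mul_of_one_le_right hr.le (one_le_pow₀ hp.le)
    simp only [e, e2, if_pos hle, mul_one]
  · intro k hk
    have hk' : ‖x‖ ≤ (p : ℝ) ^ k := by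
      by_contra h
      apply hk
      simp only [if_neg h, mul_zero]
    rw [hn, zpow_le_zpow_iff_right₀ hp] at hk'
    exact ⟨(k - n).toNat, by simp only; omega⟩
end

section
/- Let p be a prime and let s be a real number with s > p². Then (1/s) Σ_{m=0}^∞ ((−1)^m / s^m) · ((1 − p^{2m})/(1 − p^{-2m-1})) = Σ_{k=0}^∞ ((p² − 1)/((1 + p^{2k} s)(p² + p^{2k} s))) · p^k, both series converging absolutely. -/
open Real

/-- The specialization `x = 1` of the Laplace-transform identity for the heat kernel
of the Taibleson–Vladimirov Laplacian on `ℚ_p`: for a prime `p` and real `s > p²`,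
`(1/s) Σ_{m≥0} ((−1)^m/s^m) (1 − p^{2m})/(1 − p^{-2m-1})
  = Σ_{k≥0} ((p² − 1)/((1 + p^{2k}s)(p² + p^{2k}s))) p^k`,
both series converging absolutely (in `ℝ`, `Summable` is absolute convergence). -/
theorem padic_laplace_transform_identity_at_one (p : ℕ) (hp : p.Prime)
    (s : ℝ) (hs : (p : ℝ) ^ 2 < s) :
    Summable (fun m : ℕ =>
      ((-1) ^ m / s ^ m) * ((1 - (p : ℝ) ^ (2 * m)) / (1 - (p : ℝ) ^ (-(2 * (m : ℤ) + 1))))) ∧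
    Summable (fun k : ℕ =>
      (((p : ℝ) ^ 2 - 1) / ((1 + (p : ℝ) ^ (2 * k) * s) * ((p : ℝ) ^ 2 + (p : ℝ) ^ (2 * k) * s))) *
        (p : ℝ) ^ k) ∧
    (1 / s) *
        ∑' m : ℕ,
          ((-1) ^ m / s ^ m) *
            ((1 - (p : ℝ) ^ (2 * m)) / (1 - (p : ℝ) ^ (-(2 * (m : ℤ) + 1)))) =
      ∑' k : ℕ,
        (((p : ℝ) ^ 2 - 1) /
            ((1 + (p : ℝ) ^ (2 * k) * s) * ((p : ℝ) ^ 2 + (p : ℝ) ^ (2 * k) * s))) *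
          (p : ℝ) ^ k := by
  have hp2 : (2 : ℝ) ≤ p := by exact_mod_cast hp.two_le
  generalize (p : ℝ) = x at *
  have hx0 : 0 < x := by linarith
  have hs0 : 0 < s := lt_of_le_of_lt (sq_nonneg x) hs
  have hq0 : 0 < x⁻¹ := inv_pos.mpr hx0
  have hq1 : x⁻¹ < 1 := inv_lt_one_of_one_lt₀ (by linarith)
  have hxx : x * x⁻¹ = 1 := mul_inv_cancel₀ hx0.ne'
  have hr1 : x ^ 2 / s < 1 := (div_lt_one hs0).mpr hs
  have hr0 : 0 ≤ x ^ 2 / s := by positivity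
  let F : ℕ × ℕ → ℝ := fun z =>
    ((-1) ^ z.1 / s ^ z.1) * (1 - x ^ (2 * z.1)) * (x⁻¹ ^ (2 * z.1 + 1)) ^ z.2
  have hFs : Summable F := by
    have hg : Summable (fun z : ℕ × ℕ => (x ^ 2 / s) ^ z.1 * x⁻¹ ^ z.2) :=
      (summable_geometric_of_lt_one hr0 hr1).mul_of_nonneg
        (summable_geometric_of_lt_one hq0.le hq1) (fun _ => by positivity) (fun _ => by positivity)
    refine Summable.of_norm_bounded hg ?_
    rintro ⟨m, k⟩
    have h1 : 1 ≤ x ^ (2 * m) := one_le_pow₀ (by linarith)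
    have h2 : |1 - x ^ (2 * m)| ≤ x ^ (2 * m) := by rw [abs_le]; constructor <;> linarith
    have h3 : (x⁻¹ ^ (2 * m + 1)) ^ k ≤ x⁻¹ ^ k :=
      pow_le_pow_left₀ (by positivity) (pow_le_of_le_one hq0.le hq1.le (by omega)) k
    have h4 : (x ^ 2 / s) ^ m = 1 / s ^ m * x ^ (2 * m) := by
      rw [div_pow, ← pow_mul]; ring
    simp only [F, Real.norm_eq_abs, abs_mul, abs_div, abs_pow, abs_neg, abs_one, one_pow,
      abs_of_pos hs0, abs_of_pos hq0]
    rw [h4]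
    gcongr
  have hrow : ∀ m : ℕ, HasSum (fun k => F (m, k))
      (((-1) ^ m / s ^ m) * ((1 - x ^ (2 * m)) / (1 - x ^ (-(2 * (m : ℤ) + 1))))) := by
    intro m
    have e : x ^ (-(2 * (m : ℤ) + 1)) = x⁻¹ ^ (2 * m + 1) := by
      rw [zpow_neg, inv_pow]; norm_cast
    rw [e, div_eq_mul_inv (1 - x ^ (2 * m)), ← mul_assoc]
    exact (hasSum_geometric_of_lt_one (by positivity)
      (pow_lt_one₀ hq0.le hq1 (by omega))).mul_left _
  have hcol : ∀ k : ℕ, HasSum (fun m => F (m, k))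
      (s * (((x ^ 2 - 1) / ((1 + x ^ (2 * k) * s) * (x ^ 2 + x ^ (2 * k) * s))) * x ^ k)) := by
    intro k
    have hqk0 : 0 < x⁻¹ ^ (2 * k) := by positivity
    have hqk1 : x⁻¹ ^ (2 * k) ≤ 1 := pow_le_one₀ hq0.le hq1.le
    have hb : x⁻¹ ^ (2 * k) * (x ^ 2 / s) < 1 :=
      lt_of_le_of_lt (mul_le_of_le_one_left hr0 hqk1) hr1
    have ha : x⁻¹ ^ (2 * k) * (1 / s) < 1 := by
      refine lt_of_le_of_lt ?_ hb
      gcongr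
      nlinarith
    have A := hasSum_geometric_of_abs_lt_one (r := -(x⁻¹ ^ (2 * k) * (1 / s)))
      (by rw [abs_neg, abs_of_pos (by positivity)]; exact ha)
    have B := hasSum_geometric_of_abs_lt_one (r := -(x⁻¹ ^ (2 * k) * (x ^ 2 / s)))
      (by rw [abs_neg, abs_of_pos (by positivity)]; exact hb)
    convert (A.sub B).mul_left (x⁻¹ ^ k) using 1
    · rfl
    · funext m
      simp only [F]
      rw [neg_pow (x⁻¹ ^ (2 * k) * (1 / s)), neg_pow (x⁻¹ ^ (2 * k) * (x ^ 2 / s)), mul_pow, mul_pow, div_pow, div_pow,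
        one_pow, ← pow_mul, ← pow_mul, ← pow_mul]
      have : x⁻¹ ^ ((2 * m + 1) * k) = x⁻¹ ^ k * x⁻¹ ^ (2 * k * m) := by
        rw [← pow_add]; congr 1; ring
      rw [this]; ring
    · have e : x ^ (2 * k) = (x ^ k) ^ 2 := by rw [← pow_mul, mul_comm]
      rw [inv_pow, inv_pow, e]
      have hy : 0 < x ^ k := by positivity
      generalize x ^ k = y at *
      have c1 : 1 - -((y ^ 2)⁻¹ * (1 / s)) = (1 + y ^ 2 * s) / (y ^ 2 * s) := by
        field_simp; ring
      have c2 : 1 - -((y ^ 2)⁻¹ * (x ^ 2 / s)) = (x ^ 2 + y ^ 2 * s) / (y ^ 2 * s) := by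
        field_simp; ring
      rw [c1, c2]
      have d1 : 1 + y ^ 2 * s ≠ 0 := by positivity
      have d2 : x ^ 2 + y ^ 2 * s ≠ 0 := by positivity
      field_simp
      ring
  have H1 := hFs.hasSum.prod_fiberwise hrow
  have H2 := ((Equiv.prodComm ℕ ℕ).hasSum_iff.mpr hFs.hasSum).prod_fiberwise hcol
  have H3 := H2.mul_left (1 / s)
  have e3 : ∀ t : ℝ, 1 / s * (s * t) = t := fun t => by field_simp
  simp only [e3] at H3
  exact ⟨H1.summable, H3.summable, by rw [H1.tsum_eq, H3.tsum_eq]⟩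
end

section
/- Let p be a prime and define ζ_p(s) = (p − 1)/(p^{2s} − p) and ξ_p(s) = sin(2πs) p^s ζ_p(s) for complex s. Then for every s ∈ ℂ with p^{2s} ≠ p and p^{2(1−s)} ≠ p, the functional equation ξ_p(1 − s) = ξ_p(s) holds; that is, sin(2π(1−s)) p^{1−s} (p − 1)/(p^{2(1−s)} − p) = sin(2πs) p^{s} (p − 1)/(p^{2s} − p). -/
open Real

/-- Functional equation `ξ_p(1 − s) = ξ_p(s)` for the completed spectral zeta function
of `ℚ_p/ℤ_p`, where `ζ_p(s) = (p − 1)/(p^{2s} − p)` and `ξ_p(s) = sin(2πs) p^s ζ_p(s)`: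
for every `s` with `p^{2s} ≠ p` and `p^{2(1−s)} ≠ p`,
`sin(2π(1−s)) p^{1−s} (p − 1)/(p^{2(1−s)} − p) = sin(2πs) p^s (p − 1)/(p^{2s} − p)`. -/
theorem padic_zeta_functional_equation (p : ℕ) (hp : p.Prime) (s : ℂ)
    (h1 : (p : ℂ) ^ (2 * s) ≠ (p : ℂ))
    (h2 : (p : ℂ) ^ (2 * (1 - s)) ≠ (p : ℂ)) :
    Complex.sin (2 * π * (1 - s)) * (p : ℂ) ^ (1 - s) *
        ((p : ℂ) - 1) / ((p : ℂ) ^ (2 * (1 - s)) - p) =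
      Complex.sin (2 * π * s) * (p : ℂ) ^ s * ((p : ℂ) - 1) / ((p : ℂ) ^ (2 * s) - p) := by
  have hp0 : (p : ℂ) ≠ 0 := by exact_mod_cast hp.ne_zero
  have hx : (p : ℂ) ^ s ≠ 0 := by simp [Complex.cpow_eq_zero_iff, hp0]
  have e1 : (p : ℂ) ^ (2 * s) = ((p : ℂ) ^ s) ^ 2 := by
    rw [two_mul, Complex.cpow_add _ _ hp0, sq]
  have e2 : (p : ℂ) ^ (1 - s) = (p : ℂ) / (p : ℂ) ^ s := by
    rw [Complex.cpow_sub _ _ hp0, Complex.cpow_one]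
  have e3 : (p : ℂ) ^ (2 * (1 - s)) = ((p : ℂ) / (p : ℂ) ^ s) ^ 2 := by
    rw [two_mul, Complex.cpow_add _ _ hp0, e2, sq]
  have hs : Complex.sin (2 * π * (1 - s)) = -Complex.sin (2 * π * s) := by
    rw [mul_sub, mul_one, Complex.sin_two_pi_sub]
  rw [e1] at h1
  rw [e3] at h2
  rw [hs, e1, e2, e3]
  generalize (p : ℂ) ^ s = x at *
  generalize Complex.sin (2 * π * s) = y at *
  rw [div_eq_div_iff (sub_ne_zero.2 h2) (sub_ne_zero.2 h1)]
  field_simp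
  ring
end
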